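/- arXiv:2307.03594 — 2 statements merged into one kernel-verified Lean document; each statement's English description precedes it below -/
import Mathlib

section
/- Let X, Y, Y', Y'' be real random variables on a common probability space such that Y, Y', Y'' are identically distributed, (X,Y') is countermonotonic, and (X,Y'') is comonotonic. Let g₁, g₂ : ℝ → ℝ be nondecreasing functions such that g₁∘X, g₂∘Y, g₂∘Y', g₂∘Y'' are integrable, the products (g₁∘X)·(g₂∘Y), (g₁∘X)·(g₂∘Y'), (g₁∘X)·(g₂∘Y'') are integrable, and neither g₁∘X nor g₂∘Y is almost surely constant. Define C := Cov(g₁∘X, g₂∘Y), C' := Cov(g₁∘X, g₂∘Y'), C'' := Cov(g₁∘X, g₂∘Y''), and the generalised correlation r := C/|C'| if C < 0 and r := C/|C''| if C ≥ 0. Then: (i) −1 ≤ r ≤ 1 (normalisation); and (ii) if (X,Y) is comonotonic then r = 1, and if (X,Y) is countermonotonic then r = −1. -/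
open MeasureTheory

/-- `(X,Y)` is comonotonic: it has the same joint distribution as a pair of
nondecreasing functions of a single random variable. -/
def Comonotonic {Ω : Type*} [MeasurableSpace Ω] (μ : Measure Ω) (X Y : Ω → ℝ) : Prop :=
  ∃ (Z : Ω → ℝ) (ν₁ ν₂ : ℝ → ℝ), Measurable Z ∧ Monotone ν₁ ∧ Monotone ν₂ ∧
    μ.map (fun ω => (X ω, Y ω)) = μ.map (fun ω => (ν₁ (Z ω), ν₂ (Z ω)))

/-- `(X,Y)` is countermonotonic: it has the same joint distribution as a pair of a
nondecreasing and a nonincreasing function of a single random variable. -/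
def Countermonotonic {Ω : Type*} [MeasurableSpace Ω] (μ : Measure Ω) (X Y : Ω → ℝ) : Prop :=
  ∃ (Z : Ω → ℝ) (ν₁ ν₂ : ℝ → ℝ), Measurable Z ∧ Monotone ν₁ ∧ Antitone ν₂ ∧
    μ.map (fun ω => (X ω, Y ω)) = μ.map (fun ω => (ν₁ (Z ω), ν₂ (Z ω)))

/-- Covariance `Cov(U,V) = E[UV] − E[U]E[V]`. -/
noncomputable def covar {Ω : Type*} [MeasurableSpace Ω] (μ : Measure Ω) (U V : Ω → ℝ) : ℝ :=
  ∫ ω, U ω * V ω ∂μ - (∫ ω, U ω ∂μ) * (∫ ω, V ω ∂μ)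

/-- The generalised correlation built from the generalised errors `U = g₁∘X`,
`V = g₂∘Y` and the countermonotonic/comonotonic couplings `V' = g₂∘Y'`,
`V'' = g₂∘Y''`. -/
noncomputable def gCor {Ω : Type*} [MeasurableSpace Ω] (μ : Measure Ω)
    (U V V' V'' : Ω → ℝ) : ℝ :=
  if covar μ U V < 0 then covar μ U V / |covar μ U V'|
  else covar μ U V / |covar μ U V''|

/-!
For independent copies `(U₁, V₁)`, `(U₂, V₂)` of `(U, V)`, `2 Cov(U, V) = E[(U₁ - U₂) (V₁ - V₂)]`.
Writing each increment as an integral of `1{t < U₁} - 1{t < U₂}` over the threshold `t` and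
exchanging the integrals gives Hoeffding's identity
`Cov(U, V) = ∬ (P(U > s, V > t) - P(U > s) P(V > t)) ds dt`.
With the marginals fixed, the integrand is largest when `P(U > s, V > t)` attains its upper bound
`min (P(U > s)) (P(V > t))`. A comonotonic pair attains it because the two events are preimages
under `Z` of upper sets, which are nested. The integrand is then `min p q - p q ≥ 0`, which is
positive on a rectangle of thresholds unless one of the variables is almost surely constant. The
countermonotonic case follows by negating the second variable.
-/

open ProbabilityTheory

section Threshold

/-- The difference of the indicators of `t < a` and `t < b`; its integral over the threshold `t`
is the increment `a - b`. -/
noncomputable def thresholdDiff (a b t : ℝ) : ℝ :=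
  (Set.Iio a).indicator 1 t - (Set.Iio b).indicator 1 t

theorem thresholdDiff_swap (a b : ℝ) : thresholdDiff b a = -thresholdDiff a b := by
  ext t
  simp only [thresholdDiff, Pi.neg_apply, neg_sub]

theorem thresholdDiff_of_le {a b : ℝ} (h : b ≤ a) :
    thresholdDiff a b = (Set.Ico b a).indicator 1 := by
  rw [← Set.Iio_sdiff_Iio, Set.indicator_sdiff (Set.Iio_subset_Iio h)]
  rfl

theorem integrable_thresholdDiff (a b : ℝ) : Integrable (thresholdDiff a b) := by
  wlog h : b ≤ a generalizing a b
  · rw [thresholdDiff_swap]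
    exact (this b a (le_of_not_ge h)).neg
  rw [thresholdDiff_of_le h, integrable_indicator_iff measurableSet_Ico]
  exact integrableOn_const (by simp)

theorem integral_thresholdDiff (a b : ℝ) : ∫ t, thresholdDiff a b t = a - b := by
  wlog h : b ≤ a generalizing a b
  · rw [thresholdDiff_swap, integral_neg', this b a (le_of_not_ge h), neg_sub]
  rw [thresholdDiff_of_le h, integral_indicator_one measurableSet_Ico, Real.volume_real_Ico_of_le h]

theorem integral_abs_thresholdDiff (a b : ℝ) : ∫ t, |thresholdDiff a b t| = |a - b| := by
  wlog h : b ≤ a generalizing a b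
  · simpa only [thresholdDiff_swap b a, Pi.neg_apply, abs_neg, abs_sub_comm a b]
      using this b a (le_of_not_ge h)
  have hnonneg : ∀ t, 0 ≤ thresholdDiff a b t := fun t => by
    rw [thresholdDiff_of_le h]
    exact Set.indicator_nonneg (fun _ _ => zero_le_one) t
  simp only [abs_of_nonneg (hnonneg _), integral_thresholdDiff, abs_of_nonneg (sub_nonneg.2 h)]

theorem measurable_thresholdDiff :
    Measurable fun p : ℝ × ℝ × ℝ => thresholdDiff p.1 p.2.1 p.2.2 := by
  simp only [thresholdDiff, Set.indicator_apply, Set.mem_Iio, Pi.one_apply]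
  exact (Measurable.ite (measurableSet_lt (by fun_prop) (by fun_prop)) measurable_const
    measurable_const).sub (Measurable.ite (measurableSet_lt (by fun_prop) (by fun_prop))
    measurable_const measurable_const)

end Threshold

section Covariance

variable {Ω : Type*} [MeasurableSpace Ω] {μ : Measure Ω} {U V : Ω → ℝ}

theorem covar_neg_right (μ : Measure Ω) (U V : Ω → ℝ) : covar μ U (-V) = -covar μ U V := by
  simp only [covar, Pi.neg_apply, mul_neg, integral_neg]
  ring

theorem covar_indicator_one {A B : Set Ω} (hA : NullMeasurableSet A μ)
    (hB : NullMeasurableSet B μ) :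
    covar μ (A.indicator 1) (B.indicator 1) = μ.real (A ∩ B) - μ.real A * μ.real B := by
  have integral_one {S : Set Ω} (hS : NullMeasurableSet S μ) :
      ∫ ω, S.indicator (1 : Ω → ℝ) ω ∂μ = μ.real S := by
    simp only [integral_indicator₀ hS, Pi.one_apply, setIntegral_const, smul_eq_mul, mul_one]
  rw [covar, integral_one hA, integral_one hB, ← integral_one (hA.inter hB),
    Set.inter_indicator_one]
  rfl

theorem sub_mul_sub_prod_eq {Ω : Type*} (U V : Ω → ℝ) :
    (fun q : Ω × Ω => (U q.1 - U q.2) * (V q.1 - V q.2)) = fun q =>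
      (U q.1 * V q.1 + U q.2 * V q.2) - (U q.1 * V q.2 + V q.1 * U q.2) := by
  ext q
  ring

theorem integrable_sub_mul_sub_prod [IsFiniteMeasure μ] (hU : Integrable U μ) (hV : Integrable V μ)
    (hUV : Integrable (fun ω => U ω * V ω) μ) :
    Integrable (fun q : Ω × Ω => (U q.1 - U q.2) * (V q.1 - V q.2)) (μ.prod μ) := by
  rw [sub_mul_sub_prod_eq]
  exact ((hUV.comp_fst μ).add (hUV.comp_snd μ)).sub ((hU.mul_prod hV).add (hV.mul_prod hU))

theorem integral_sub_mul_sub_prod [IsProbabilityMeasure μ] (hU : Integrable U μ)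
    (hV : Integrable V μ) (hUV : Integrable (fun ω => U ω * V ω) μ) :
    ∫ q : Ω × Ω, (U q.1 - U q.2) * (V q.1 - V q.2) ∂μ.prod μ = 2 * covar μ U V := by
  have hfst := hUV.comp_fst μ
  have hsnd := hUV.comp_snd μ
  have hcross := hU.mul_prod hV
  have hcross' := hV.mul_prod hU
  rw [sub_mul_sub_prod_eq, integral_sub (by exact hfst.add hsnd) (by exact hcross.add hcross'),
    integral_add hfst hsnd, integral_add hcross hcross', integral_prod_mul, integral_prod_mul,
    integral_fun_fst (fun ω => U ω * V ω), integral_fun_snd (fun ω => U ω * V ω)]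
  simp only [probReal_univ, one_smul, covar]
  ring

end Covariance

section Hoeffding

/-- The integrand of Hoeffding's covariance identity: the gap at `p` between the joint survival
function of `(U, V)` and the product of the marginal ones. -/
noncomputable def survivalGap {Ω : Type*} [MeasurableSpace Ω] (μ : Measure Ω) (U V : Ω → ℝ)
    (p : ℝ × ℝ) : ℝ :=
  μ.real ({ω | p.1 < U ω} ∩ {ω | p.2 < V ω}) - μ.real {ω | p.1 < U ω} * μ.real {ω | p.2 < V ω}

/-- The product of the threshold differences of `U` and `V` between the two sample points `q.1` and
`q.2`, at the pair of thresholds `p`. Hoeffding's identity comes from integrating it over `p` and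
over `q` in either order. -/
noncomputable def hoeffdingKernel {Ω : Type*} (U V : Ω → ℝ) (q : Ω × Ω) (p : ℝ × ℝ) : ℝ :=
  thresholdDiff (U q.1) (U q.2) p.1 * thresholdDiff (V q.1) (V q.2) p.2

theorem integral_hoeffdingKernel {Ω : Type*} (U V : Ω → ℝ) (q : Ω × Ω) :
    ∫ p, hoeffdingKernel U V q p = (U q.1 - U q.2) * (V q.1 - V q.2) := by
  simp only [hoeffdingKernel, Measure.volume_eq_prod]
  rw [integral_prod_mul, integral_thresholdDiff, integral_thresholdDiff]

theorem integral_abs_hoeffdingKernel {Ω : Type*} (U V : Ω → ℝ) (q : Ω × Ω) :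
    ∫ p, |hoeffdingKernel U V q p| = |(U q.1 - U q.2) * (V q.1 - V q.2)| := by
  simp only [hoeffdingKernel, Measure.volume_eq_prod, abs_mul]
  rw [integral_prod_mul (fun s => |thresholdDiff (U q.1) (U q.2) s|)
    (fun t => |thresholdDiff (V q.1) (V q.2) t|), integral_abs_thresholdDiff,
    integral_abs_thresholdDiff]

variable {Ω : Type*} [MeasurableSpace Ω] {μ : Measure Ω} {U V : Ω → ℝ}

theorem aemeasurable_hoeffdingKernel [SFinite μ] (hU : AEMeasurable U μ) (hV : AEMeasurable V μ) :
    AEMeasurable (Function.uncurry (hoeffdingKernel U V)) ((μ.prod μ).prod volume) := by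
  have hdiff {W : Ω → ℝ} (hW : AEMeasurable W μ) {π : ℝ × ℝ → ℝ} (hπ : Measurable π) :
      AEMeasurable (fun x : (Ω × Ω) × ℝ × ℝ => thresholdDiff (W x.1.1) (W x.1.2) (π x.2))
        ((μ.prod μ).prod volume) :=
    measurable_thresholdDiff.comp_aemeasurable
      (hW.comp_fst.comp_fst.prodMk (hW.comp_snd.comp_fst.prodMk (by fun_prop)))
  exact (hdiff hU measurable_fst).mul (hdiff hV measurable_snd)

theorem integrable_hoeffdingKernel [IsFiniteMeasure μ] (hU : Integrable U μ) (hV : Integrable V μ)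
    (hUV : Integrable (fun ω => U ω * V ω) μ) :
    Integrable (Function.uncurry (hoeffdingKernel U V)) ((μ.prod μ).prod volume) := by
  rw [integrable_prod_iff
    (aemeasurable_hoeffdingKernel hU.aemeasurable hV.aemeasurable).aestronglyMeasurable]
  refine ⟨.of_forall fun q => (integrable_thresholdDiff (U q.1) (U q.2)).mul_prod
    (integrable_thresholdDiff (V q.1) (V q.2)), ?_⟩
  simp only [Function.uncurry_apply_pair, Real.norm_eq_abs, integral_abs_hoeffdingKernel]
  exact (integrable_sub_mul_sub_prod hU hV hUV).abs

variable [IsProbabilityMeasure μ]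

theorem integral_hoeffdingKernel_prod (hU : AEMeasurable U μ) (hV : AEMeasurable V μ)
    (p : ℝ × ℝ) : ∫ q, hoeffdingKernel U V q p ∂μ.prod μ = 2 * survivalGap μ U V p := by
  have hA : NullMeasurableSet {ω | p.1 < U ω} μ := nullMeasurableSet_lt aemeasurable_const hU
  have hB : NullMeasurableSet {ω | p.2 < V ω} μ := nullMeasurableSet_lt aemeasurable_const hV
  have integrable_one {S : Set Ω} (hS : NullMeasurableSet S μ) :
      Integrable (S.indicator (1 : Ω → ℝ)) μ := (integrable_const 1).indicator₀ hS
  have hAB := integrable_one (hA.inter hB)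
  rw [Set.inter_indicator_one] at hAB
  rw [survivalGap, ← covar_indicator_one hA hB]
  exact integral_sub_mul_sub_prod (integrable_one hA) (integrable_one hB) hAB

theorem integrable_survivalGap (hU : Integrable U μ) (hV : Integrable V μ)
    (hUV : Integrable (fun ω => U ω * V ω) μ) : Integrable (survivalGap μ U V) := by
  have h := (integrable_hoeffdingKernel hU hV hUV).integral_prod_right
  simp only [Function.uncurry_apply_pair,
    integral_hoeffdingKernel_prod hU.aemeasurable hV.aemeasurable] at h
  exact (integrable_const_mul_iff (by simp) _).1 h

/-- **Hoeffding's covariance identity.** -/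
theorem integral_survivalGap (hU : Integrable U μ) (hV : Integrable V μ)
    (hUV : Integrable (fun ω => U ω * V ω) μ) : ∫ p, survivalGap μ U V p = covar μ U V := by
  have hswap := integral_integral_swap (integrable_hoeffdingKernel hU hV hUV)
  simp only [integral_hoeffdingKernel, integral_sub_mul_sub_prod hU hV hUV,
    integral_hoeffdingKernel_prod hU.aemeasurable hV.aemeasurable, integral_const_mul] at hswap
  linarith

theorem exists_Ioo_survival_mem_Ioo (hU : Integrable U μ) (hnc : ∀ c : ℝ, ¬ U =ᵐ[μ] fun _ => c) :
    ∃ a b : ℝ, a < b ∧ ∀ t ∈ Set.Ioo a b, μ.real {ω | t < U ω} ∈ Set.Ioo (0 : ℝ) 1 := by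
  set m := ∫ ω, U ω ∂μ with hm
  obtain ⟨a, ham, ha⟩ : ∃ a < m, μ {ω | U ω ≤ a} ≠ 0 := by
    by_contra! hnull
    have hle : ∀ᵐ ω ∂μ, m ≤ U ω := (ae_const_le_iff_forall_lt_measure_zero U m).2 hnull
    refine hnc m ((integral_eq_iff_of_ae_le (integrable_const m) hU hle).1 ?_).symm
    simp only [integral_const, probReal_univ, one_smul, hm]
  refine ⟨a, m, ham, fun t ht => ⟨?_, ?_⟩⟩
  · calc 0 < μ.real {ω | m ≤ U ω} :=
          ENNReal.toReal_pos (measure_integral_le_pos hU).ne' (measure_ne_top _ _)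
      _ ≤ μ.real {ω | t < U ω} := measureReal_mono fun ω hω => ht.2.trans_le hω
  · have hpos : 0 < μ.real {ω | U ω ≤ t} :=
      (ENNReal.toReal_pos ha (measure_ne_top _ _)).trans_le
        (measureReal_mono fun ω hω => le_trans hω ht.1.le)
    have hcompl : {ω | t < U ω} = {ω | U ω ≤ t}ᶜ := by
      ext ω
      exact (not_le (a := U ω)).symm
    rw [hcompl, probReal_compl_eq_one_sub₀
      (nullMeasurableSet_le hU.aemeasurable aemeasurable_const)]
    linarith

end Hoeffding

section Couplings

variable {Ω Ω' : Type*} [MeasurableSpace Ω] [MeasurableSpace Ω'] {μ : Measure Ω}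
  {μ' : Measure Ω'} {X Y : Ω → ℝ} {X' Y' : Ω' → ℝ} {f g : ℝ → ℝ}

theorem map_prodMk_comp {X' Y' : Ω → ℝ} (hX : AEMeasurable X μ) (hY : AEMeasurable Y μ)
    (hX' : AEMeasurable X' μ) (hY' : AEMeasurable Y' μ) (hf : Measurable f) (hg : Measurable g)
    (h : μ.map (fun ω => (X ω, Y ω)) = μ.map (fun ω => (X' ω, Y' ω))) :
    μ.map (fun ω => (f (X ω), g (Y ω))) = μ.map (fun ω => (f (X' ω), g (Y' ω))) :=
  (IdentDistrib.comp ⟨hX.prodMk hY, hX'.prodMk hY', h⟩ (hf.prodMap hg)).map_eq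

theorem Comonotonic.comp (h : Comonotonic μ X Y) (hX : AEMeasurable X μ) (hY : AEMeasurable Y μ)
    (hf : Monotone f) (hg : Monotone g) :
    Comonotonic μ (fun ω => f (X ω)) (fun ω => g (Y ω)) := by
  obtain ⟨Z, ν₁, ν₂, hZ, h₁, h₂, hmap⟩ := h
  exact ⟨Z, f ∘ ν₁, g ∘ ν₂, hZ, hf.comp h₁, hg.comp h₂, map_prodMk_comp hX hY
    (h₁.measurable.comp hZ).aemeasurable (h₂.measurable.comp hZ).aemeasurable
    hf.measurable hg.measurable hmap⟩

theorem Countermonotonic.comp (h : Countermonotonic μ X Y) (hX : AEMeasurable X μ)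
    (hY : AEMeasurable Y μ) (hf : Monotone f) (hg : Monotone g) :
    Countermonotonic μ (fun ω => f (X ω)) (fun ω => g (Y ω)) := by
  obtain ⟨Z, ν₁, ν₂, hZ, h₁, h₂, hmap⟩ := h
  exact ⟨Z, f ∘ ν₁, g ∘ ν₂, hZ, hf.comp h₁, hg.comp_antitone h₂, map_prodMk_comp hX hY
    (h₁.measurable.comp hZ).aemeasurable (h₂.measurable.comp hZ).aemeasurable
    hf.measurable hg.measurable hmap⟩

theorem Countermonotonic.neg_right (h : Countermonotonic μ X Y) (hX : AEMeasurable X μ)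
    (hY : AEMeasurable Y μ) : Comonotonic μ X (-Y) := by
  obtain ⟨Z, ν₁, ν₂, hZ, h₁, h₂, hmap⟩ := h
  exact ⟨Z, ν₁, -ν₂, hZ, h₁, h₂.neg, map_prodMk_comp hX hY
    (h₁.measurable.comp hZ).aemeasurable (h₂.measurable.comp hZ).aemeasurable
    measurable_id measurable_neg hmap⟩

theorem Comonotonic.measureReal_inter_eq_min [IsFiniteMeasure μ] (h : Comonotonic μ X Y)
    (hX : AEMeasurable X μ) (hY : AEMeasurable Y μ) {S T : Set ℝ} (hS : IsUpperSet S)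
    (hT : IsUpperSet T) :
    μ.real (X ⁻¹' S ∩ Y ⁻¹' T) = min (μ.real (X ⁻¹' S)) (μ.real (Y ⁻¹' T)) := by
  obtain ⟨Z, ν₁, ν₂, hZ, h₁, h₂, hmap⟩ := h
  have hident : IdentDistrib (fun ω => (X ω, Y ω)) (fun ω => (ν₁ (Z ω), ν₂ (Z ω))) μ μ :=
    ⟨hX.prodMk hY, ((h₁.measurable.comp hZ).prodMk (h₂.measurable.comp hZ)).aemeasurable, hmap⟩
  have hSm := hS.ordConnected.measurableSet
  have hTm := hT.ordConnected.measurableSet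
  have hinter : μ.real (X ⁻¹' S ∩ Y ⁻¹' T) = μ.real (Z ⁻¹' (ν₁ ⁻¹' S) ∩ Z ⁻¹' (ν₂ ⁻¹' T)) :=
    congrArg ENNReal.toReal (hident.measure_mem_eq (hSm.prod hTm))
  have hfst : μ.real (X ⁻¹' S) = μ.real (Z ⁻¹' (ν₁ ⁻¹' S)) :=
    congrArg ENNReal.toReal ((hident.comp measurable_fst).measure_mem_eq hSm)
  have hsnd : μ.real (Y ⁻¹' T) = μ.real (Z ⁻¹' (ν₂ ⁻¹' T)) :=
    congrArg ENNReal.toReal ((hident.comp measurable_snd).measure_mem_eq hTm)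
  rw [hinter, hfst, hsnd]
  rcases (hS.preimage h₁).total (hT.preimage h₂) with hsub | hsub
  · rw [Set.inter_eq_left.2 (Set.preimage_mono hsub),
      min_eq_left (measureReal_mono (Set.preimage_mono hsub))]
  · rw [Set.inter_eq_right.2 (Set.preimage_mono hsub),
      min_eq_right (measureReal_mono (Set.preimage_mono hsub))]

theorem Comonotonic.survivalGap_eq [IsFiniteMeasure μ] (h : Comonotonic μ X Y)
    (hX : AEMeasurable X μ) (hY : AEMeasurable Y μ) (p : ℝ × ℝ) :
    survivalGap μ X Y p = min (μ.real {ω | p.1 < X ω}) (μ.real {ω | p.2 < Y ω}) -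
      μ.real {ω | p.1 < X ω} * μ.real {ω | p.2 < Y ω} :=
  congrArg (· - _) (h.measureReal_inter_eq_min hX hY (isUpperSet_Ioi p.1) (isUpperSet_Ioi p.2))

theorem Comonotonic.survivalGap_le [IsFiniteMeasure μ] [IsFiniteMeasure μ']
    (h : Comonotonic μ' X' Y') (hX : IdentDistrib X X' μ μ') (hY : IdentDistrib Y Y' μ μ')
    (p : ℝ × ℝ) : survivalGap μ X Y p ≤ survivalGap μ' X' Y' p := by
  have hXp : μ.real {ω | p.1 < X ω} = μ'.real {ω | p.1 < X' ω} :=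
    congrArg ENNReal.toReal (hX.measure_mem_eq measurableSet_Ioi)
  have hYp : μ.real {ω | p.2 < Y ω} = μ'.real {ω | p.2 < Y' ω} :=
    congrArg ENNReal.toReal (hY.measure_mem_eq measurableSet_Ioi)
  rw [h.survivalGap_eq hX.aemeasurable_snd hY.aemeasurable_snd, ← hXp, ← hYp]
  exact sub_le_sub_right (le_min (measureReal_mono Set.inter_subset_left)
    (measureReal_mono Set.inter_subset_right)) _

variable [IsProbabilityMeasure μ] [IsProbabilityMeasure μ']

theorem Comonotonic.covar_le (h : Comonotonic μ' X' Y') (hX : IdentDistrib X X' μ μ')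
    (hY : IdentDistrib Y Y' μ μ') (hiX : Integrable X μ) (hiY : Integrable Y μ)
    (hiXY : Integrable (fun ω => X ω * Y ω) μ) (hiXY' : Integrable (fun ω => X' ω * Y' ω) μ') :
    covar μ X Y ≤ covar μ' X' Y' := by
  have hiX' := hX.integrable_iff.1 hiX
  have hiY' := hY.integrable_iff.1 hiY
  rw [← integral_survivalGap hiX hiY hiXY, ← integral_survivalGap hiX' hiY' hiXY']
  exact integral_mono (integrable_survivalGap hiX hiY hiXY)
    (integrable_survivalGap hiX' hiY' hiXY') (h.survivalGap_le hX hY)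

theorem Comonotonic.covar_eq (h : Comonotonic μ X Y) (h' : Comonotonic μ' X' Y')
    (hX : IdentDistrib X X' μ μ') (hY : IdentDistrib Y Y' μ μ') (hiX : Integrable X μ)
    (hiY : Integrable Y μ) (hiXY : Integrable (fun ω => X ω * Y ω) μ)
    (hiXY' : Integrable (fun ω => X' ω * Y' ω) μ') : covar μ X Y = covar μ' X' Y' :=
  (h'.covar_le hX hY hiX hiY hiXY hiXY').antisymm
    (h.covar_le hX.symm hY.symm (hX.integrable_iff.1 hiX) (hY.integrable_iff.1 hiY) hiXY' hiXY)

theorem Comonotonic.covar_pos (h : Comonotonic μ X Y) (hiX : Integrable X μ)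
    (hiY : Integrable Y μ) (hiXY : Integrable (fun ω => X ω * Y ω) μ)
    (hncX : ∀ c : ℝ, ¬ X =ᵐ[μ] fun _ => c) (hncY : ∀ c : ℝ, ¬ Y =ᵐ[μ] fun _ => c) :
    0 < covar μ X Y := by
  have hgap := h.survivalGap_eq hiX.aemeasurable hiY.aemeasurable
  have hnonneg : 0 ≤ survivalGap μ X Y := fun p => by
    rw [hgap, Pi.zero_apply, sub_nonneg]
    exact le_min (mul_le_of_le_one_right measureReal_nonneg measureReal_le_one)
      (mul_le_of_le_one_left measureReal_nonneg measureReal_le_one)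
  obtain ⟨a, b, hab, hX⟩ := exists_Ioo_survival_mem_Ioo hiX hncX
  obtain ⟨c, d, hcd, hY⟩ := exists_Ioo_survival_mem_Ioo hiY hncY
  have hsupport : Set.Ioo a b ×ˢ Set.Ioo c d ⊆ Function.support (survivalGap μ X Y) := by
    rintro p ⟨hp₁, hp₂⟩
    rw [Function.mem_support, hgap]
    exact (sub_pos.2 (lt_min (mul_lt_of_lt_one_right (hX _ hp₁).1 (hY _ hp₂).2)
      (mul_lt_of_lt_one_left (hY _ hp₂).1 (hX _ hp₁).2))).ne'
  rw [← integral_survivalGap hiX hiY hiXY,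
    integral_pos_iff_support_of_nonneg hnonneg (integrable_survivalGap hiX hiY hiXY)]
  exact ((isOpen_Ioo.prod isOpen_Ioo).measure_pos volume
    ((Set.nonempty_Ioo.2 hab).prod (Set.nonempty_Ioo.2 hcd))).trans_le (measure_mono hsupport)

theorem Countermonotonic.le_covar (h : Countermonotonic μ' X' Y') (hX : IdentDistrib X X' μ μ')
    (hY : IdentDistrib Y Y' μ μ') (hiX : Integrable X μ) (hiY : Integrable Y μ)
    (hiXY : Integrable (fun ω => X ω * Y ω) μ) (hiXY' : Integrable (fun ω => X' ω * Y' ω) μ') :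
    covar μ' X' Y' ≤ covar μ X Y := by
  have hneg := (h.neg_right hX.aemeasurable_snd hY.aemeasurable_snd).covar_le hX hY.neg hiX
    hiY.neg (by simpa using hiXY.neg) (by simpa using hiXY'.neg)
  rwa [covar_neg_right, covar_neg_right, neg_le_neg_iff] at hneg

theorem Countermonotonic.covar_eq (h : Countermonotonic μ X Y) (h' : Countermonotonic μ' X' Y')
    (hX : IdentDistrib X X' μ μ') (hY : IdentDistrib Y Y' μ μ') (hiX : Integrable X μ)
    (hiY : Integrable Y μ) (hiXY : Integrable (fun ω => X ω * Y ω) μ)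
    (hiXY' : Integrable (fun ω => X' ω * Y' ω) μ') : covar μ X Y = covar μ' X' Y' :=
  le_antisymm
    (h.le_covar hX.symm hY.symm (hX.integrable_iff.1 hiX) (hY.integrable_iff.1 hiY) hiXY' hiXY)
    (h'.le_covar hX hY hiX hiY hiXY hiXY')

theorem Countermonotonic.covar_neg (h : Countermonotonic μ X Y) (hiX : Integrable X μ)
    (hiY : Integrable Y μ) (hiXY : Integrable (fun ω => X ω * Y ω) μ)
    (hncX : ∀ c : ℝ, ¬ X =ᵐ[μ] fun _ => c) (hncY : ∀ c : ℝ, ¬ Y =ᵐ[μ] fun _ => c) :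
    covar μ X Y < 0 := by
  have hpos := (h.neg_right hiX.aemeasurable hiY.aemeasurable).covar_pos hiX hiY.neg
    (by simpa using hiXY.neg) hncX fun c hc => hncY (-c) (by
      filter_upwards [hc] with ω hω
      rw [← hω, Pi.neg_apply, neg_neg])
  rwa [covar_neg_right, neg_pos] at hpos

end Couplings

section GeneralisedCorrelation

variable {Ω : Type*} [MeasurableSpace Ω] {μ : Measure Ω} {U V V' V'' : Ω → ℝ}

-- A vanishing denominator is harmless here: it forces `covar μ U V = 0`, and `0 / 0 = 0`.
theorem abs_gCor_le_one (h' : covar μ U V' ≤ covar μ U V) (h'' : covar μ U V ≤ covar μ U V'') :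
    |gCor μ U V V' V''| ≤ 1 := by
  rw [gCor]
  split_ifs with hC
  · rw [abs_div, abs_abs]
    exact div_le_one_of_le₀ (abs_le_abs_of_nonpos hC.le h') (abs_nonneg _)
  · rw [abs_div, abs_abs]
    exact div_le_one_of_le₀ (abs_le_abs_of_nonneg (not_lt.1 hC) h'') (abs_nonneg _)

theorem gCor_eq_one (hpos : 0 < covar μ U V) (heq : covar μ U V = covar μ U V'') :
    gCor μ U V V' V'' = 1 := by
  rw [gCor, if_neg hpos.not_gt, ← heq, abs_of_pos hpos, div_self hpos.ne']

theorem gCor_eq_neg_one (hneg : covar μ U V < 0) (heq : covar μ U V = covar μ U V') :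
    gCor μ U V V' V'' = -1 := by
  rw [gCor, if_pos hneg, ← heq, abs_of_neg hneg, div_neg_self hneg.ne]

end GeneralisedCorrelation

theorem generalised_correlation_properties
    {Ω : Type*} [MeasurableSpace Ω] (μ : Measure Ω) [IsProbabilityMeasure μ]
    (X Y Y' Y'' : Ω → ℝ)
    (hX : Measurable X) (hY : Measurable Y) (hY' : Measurable Y') (hY'' : Measurable Y'')
    (hid' : μ.map Y' = μ.map Y) (hid'' : μ.map Y'' = μ.map Y)
    (hcm : Countermonotonic μ X Y') (hco : Comonotonic μ X Y'')
    (g₁ g₂ : ℝ → ℝ) (hg₁ : Monotone g₁) (hg₂ : Monotone g₂)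
    (hiX : Integrable (fun ω => g₁ (X ω)) μ)
    (hiY : Integrable (fun ω => g₂ (Y ω)) μ)
    (hiY' : Integrable (fun ω => g₂ (Y' ω)) μ)
    (hiY'' : Integrable (fun ω => g₂ (Y'' ω)) μ)
    (hiP : Integrable (fun ω => g₁ (X ω) * g₂ (Y ω)) μ)
    (hiP' : Integrable (fun ω => g₁ (X ω) * g₂ (Y' ω)) μ)
    (hiP'' : Integrable (fun ω => g₁ (X ω) * g₂ (Y'' ω)) μ)
    (hncX : ∀ c : ℝ, ¬ ((fun ω => g₁ (X ω)) =ᵐ[μ] fun _ => c))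
    (hncY : ∀ c : ℝ, ¬ ((fun ω => g₂ (Y ω)) =ᵐ[μ] fun _ => c)) :
    (-1 ≤ gCor μ (fun ω => g₁ (X ω)) (fun ω => g₂ (Y ω))
        (fun ω => g₂ (Y' ω)) (fun ω => g₂ (Y'' ω)) ∧
      gCor μ (fun ω => g₁ (X ω)) (fun ω => g₂ (Y ω))
        (fun ω => g₂ (Y' ω)) (fun ω => g₂ (Y'' ω)) ≤ 1) ∧
    (Comonotonic μ X Y →
      gCor μ (fun ω => g₁ (X ω)) (fun ω => g₂ (Y ω))
        (fun ω => g₂ (Y' ω)) (fun ω => g₂ (Y'' ω)) = 1) ∧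
    (Countermonotonic μ X Y →
      gCor μ (fun ω => g₁ (X ω)) (fun ω => g₂ (Y ω))
        (fun ω => g₂ (Y' ω)) (fun ω => g₂ (Y'' ω)) = -1) := by
  have hU : IdentDistrib (fun ω => g₁ (X ω)) (fun ω => g₁ (X ω)) μ μ := .refl hiX.aemeasurable
  have hV' : IdentDistrib (fun ω => g₂ (Y ω)) (fun ω => g₂ (Y' ω)) μ μ :=
    IdentDistrib.comp ⟨hY.aemeasurable, hY'.aemeasurable, hid'.symm⟩ hg₂.measurable
  have hV'' : IdentDistrib (fun ω => g₂ (Y ω)) (fun ω => g₂ (Y'' ω)) μ μ :=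
    IdentDistrib.comp ⟨hY.aemeasurable, hY''.aemeasurable, hid''.symm⟩ hg₂.measurable
  have hcm' := hcm.comp hX.aemeasurable hY'.aemeasurable hg₁ hg₂
  have hco'' := hco.comp hX.aemeasurable hY''.aemeasurable hg₁ hg₂
  refine ⟨abs_le.1 (abs_gCor_le_one (hcm'.le_covar hU hV' hiX hiY hiP hiP')
    (hco''.covar_le hU hV'' hiX hiY hiP hiP'')), fun h => ?_, fun h => ?_⟩
  · have hcoXY := h.comp hX.aemeasurable hY.aemeasurable hg₁ hg₂
    exact gCor_eq_one (hcoXY.covar_pos hiX hiY hiP hncX hncY)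
      (hcoXY.covar_eq hco'' hU hV'' hiX hiY hiP hiP'')
  · have hcmXY := h.comp hX.aemeasurable hY.aemeasurable hg₁ hg₂
    exact gCor_eq_neg_one (hcmXY.covar_neg hiX hiY hiP hncX hncY)
      (hcmXY.covar_eq hcm' hU hV' hiX hiY hiP hiP')
end

section
/- Let X, Y be real random variables on a common probability space whose CDFs F_X and F_Y are continuous. Then ∫_{(0,1)²} (P(X ≤ q_α(X), Y ≤ q_β(Y)) − α·β) dα dβ = Cov(F_X∘X, F_Y∘Y), i.e., the summary covariance induced by quantile function covariance with respect to Lebesgue measure on the unit square equals the Spearman covariance, the covariance of the probability integral transforms. -/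
open MeasureTheory

/-- The CDF of a real random variable `X` under `μ`. -/
noncomputable def cdfF {Ω : Type*} [MeasurableSpace Ω] (μ : Measure Ω)
    (X : Ω → ℝ) (x : ℝ) : ℝ :=
  (μ {ω | X ω ≤ x}).toReal

/-- The lower α-quantile of `X` under `μ`. -/
noncomputable def lquant {Ω : Type*} [MeasurableSpace Ω] (μ : Measure Ω)
    (X : Ω → ℝ) (α : ℝ) : ℝ :=
  sInf {x : ℝ | α ≤ cdfF μ X x}

/-!
Put `U = F_X ∘ X` and `V = F_Y ∘ Y`. Continuity of the marginals gives `{X ≤ q_α(X)} = {U < α}`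
up to a null set, and both events have probability `α`. So the quantile covariance at levels `α`
and `β` is the covariance of the indicators of `{U < α}` and `{V < β}`, and Hoeffding's identity
`Cov(U, V) = ∫ Cov(1_{U < a}, 1_{V < b}) da db` concludes.

For Hoeffding's identity let `(U', V')` be an independent copy of `(U, V)`, so that
`2 Cov(U, V) = E[(U - U')(V - V')]`, and likewise for the indicators. Since
`U' - U = ∫ (1_{U < a} - 1_{U' < a}) da`, the identity is Fubini's theorem.
-/

open Set ProbabilityTheory

section Covar

variable {Ω : Type*} [MeasurableSpace Ω] {μ : Measure Ω} {f g : Ω → ℝ}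

lemma covar_comm (f g : Ω → ℝ) : covar μ f g = covar μ g f := by
  simp only [covar, mul_comm]

lemma covar_const_left [IsProbabilityMeasure μ] (c : ℝ) (g : Ω → ℝ) :
    covar μ (fun _ => c) g = 0 := by
  simp [covar, integral_const_mul]

lemma covar_indicator_one_s19 {s t : Set Ω} (hs : NullMeasurableSet s μ)
    (ht : NullMeasurableSet t μ) :
    covar μ (s.indicator 1) (t.indicator 1) = μ.real (s ∩ t) - μ.real s * μ.real t := by
  have integral_indicator {r : Set Ω} (hr : NullMeasurableSet r μ) :
      ∫ ω, r.indicator (1 : Ω → ℝ) ω ∂μ = μ.real r := by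
    simp [integral_indicator₀ hr]
  have hmul (ω : Ω) : s.indicator (1 : Ω → ℝ) ω * t.indicator 1 ω = (s ∩ t).indicator 1 ω := by
    simp [inter_indicator_one]
  simp_rw [covar, hmul, integral_indicator hs, integral_indicator ht,
    integral_indicator (hs.inter ht)]

lemma integrable_sub_mul_sub_prod_s19 [IsFiniteMeasure μ] (hf : Integrable f μ)
    (hg : Integrable g μ) (hfg : Integrable (fun ω => f ω * g ω) μ) :
    Integrable (fun z : Ω × Ω => (f z.1 - f z.2) * (g z.1 - g z.2)) (μ.prod μ) := by
  refine (((hfg.comp_fst μ).sub (hf.mul_prod hg)).sub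
    ((hg.mul_prod hf).sub (hfg.comp_snd μ))).congr (.of_forall fun z => ?_)
  simp only [Pi.sub_apply]
  ring

lemma integral_sub_mul_sub_prod_s19 [IsProbabilityMeasure μ] (hf : Integrable f μ)
    (hg : Integrable g μ) (hfg : Integrable (fun ω => f ω * g ω) μ) :
    ∫ z : Ω × Ω, (f z.1 - f z.2) * (g z.1 - g z.2) ∂(μ.prod μ) = 2 * covar μ f g := by
  have hfst : Integrable (fun z : Ω × Ω => f z.1 * g z.1) (μ.prod μ) := hfg.comp_fst μ
  have hsnd : Integrable (fun z : Ω × Ω => f z.2 * g z.2) (μ.prod μ) := hfg.comp_snd μ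
  have hcross : Integrable (fun z : Ω × Ω => f z.1 * g z.2) (μ.prod μ) := hf.mul_prod hg
  have hcross' : Integrable (fun z : Ω × Ω => g z.1 * f z.2) (μ.prod μ) := hg.mul_prod hf
  calc ∫ z : Ω × Ω, (f z.1 - f z.2) * (g z.1 - g z.2) ∂(μ.prod μ)
    _ = ∫ z : Ω × Ω, (f z.1 * g z.1 - f z.1 * g z.2 - (g z.1 * f z.2 - f z.2 * g z.2))
          ∂(μ.prod μ) := by
      congr with z
      ring
    _ = ∫ ω, f ω * g ω ∂μ - (∫ ω, f ω ∂μ) * ∫ ω, g ω ∂μ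
          - ((∫ ω, g ω ∂μ) * ∫ ω, f ω ∂μ - ∫ ω, f ω * g ω ∂μ) := by
      rw [integral_sub (hfst.sub' hcross) (hcross'.sub' hsnd), integral_sub hfst hcross,
        integral_sub hcross' hsnd, integral_fun_fst (fun ω => f ω * g ω),
        integral_fun_snd (fun ω => f ω * g ω), integral_prod_mul, integral_prod_mul,
        probReal_univ, one_smul]
    _ = 2 * covar μ f g := by
      rw [covar]
      ring

end Covar

section SignedIoc

/-- The indicator of the interval between `u` and `v`, counted positively if `u ≤ v` and negatively
otherwise. It is written as a difference of indicators of half-lines so that, for random `u` and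
`v`, it is the difference of the indicators of two events. -/
noncomputable def signedIoc (u v a : ℝ) : ℝ :=
  (Ioi u).indicator 1 a - (Ioi v).indicator 1 a

lemma signedIoc_swap (u v : ℝ) : signedIoc v u = -signedIoc u v := by
  ext a
  simp [signedIoc]

lemma signedIoc_of_le {u v : ℝ} (huv : u ≤ v) : signedIoc u v = (Ioc u v).indicator 1 := by
  rw [← Ioi_sdiff_Ioi, indicator_sdiff (Ioi_subset_Ioi huv)]
  rfl

lemma measurable_signedIoc : Measurable fun t : ℝ × ℝ × ℝ => signedIoc t.1 t.2.1 t.2.2 := by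
  have hIoi {u : ℝ × ℝ × ℝ → ℝ} (hu : Measurable u) :
      Measurable fun t => (Ioi (u t)).indicator (1 : ℝ → ℝ) t.2.2 :=
    measurable_one.indicator (measurableSet_lt hu measurable_snd.snd)
  exact (hIoi measurable_fst).sub (hIoi measurable_snd.fst)

lemma integrable_signedIoc (u v : ℝ) : Integrable (signedIoc u v) := by
  wlog huv : u ≤ v generalizing u v
  · rw [signedIoc_swap]
    exact (this v u (le_of_not_ge huv)).neg
  rw [signedIoc_of_le huv]
  exact (integrableOn_const (by simp)).integrable_indicator measurableSet_Ioc

lemma integral_signedIoc (u v : ℝ) : ∫ a, signedIoc u v a = v - u := by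
  wlog huv : u ≤ v generalizing u v
  · simp only [signedIoc_swap v u, Pi.neg_apply, integral_neg, this v u (le_of_not_ge huv),
      neg_sub]
  rw [signedIoc_of_le huv, integral_indicator_one measurableSet_Ioc,
    Real.volume_real_Ioc_of_le huv]

lemma integral_norm_signedIoc (u v : ℝ) : ∫ a, ‖signedIoc u v a‖ = |u - v| := by
  wlog huv : u ≤ v generalizing u v
  · simp only [signedIoc_swap v u, Pi.neg_apply, norm_neg, this v u (le_of_not_ge huv),
      abs_sub_comm v u]
  have hnorm (a : ℝ) : ‖signedIoc u v a‖ = signedIoc u v a := by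
    rw [signedIoc_of_le huv]
    exact Real.norm_of_nonneg (indicator_nonneg (fun _ _ => zero_le_one) a)
  simp_rw [hnorm, integral_signedIoc, abs_sub_comm u v, abs_of_nonneg (sub_nonneg.2 huv)]

end SignedIoc

section Hoeffding

variable {Ω : Type*} [MeasurableSpace Ω] {μ : Measure Ω} {U V : Ω → ℝ}

lemma integrable_signedIoc_mul_signedIoc [IsFiniteMeasure μ] (hU : Integrable U μ)
    (hV : Integrable V μ) (hUV : Integrable (fun ω => U ω * V ω) μ) :
    Integrable (fun t : (Ω × Ω) × ℝ × ℝ =>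
      signedIoc (U t.1.1) (U t.1.2) t.2.1 * signedIoc (V t.1.1) (V t.1.2) t.2.2)
      ((μ.prod μ).prod volume) := by
  have hmeas {W : Ω → ℝ} (hW : AEMeasurable W μ) {c : ℝ × ℝ → ℝ} (hc : Measurable c) :
      AEMeasurable (fun t : (Ω × Ω) × ℝ × ℝ => signedIoc (W t.1.1) (W t.1.2) (c t.2))
        ((μ.prod μ).prod volume) :=
    measurable_signedIoc.comp_aemeasurable <| hW.comp_fst.comp_fst.prodMk <|
      hW.comp_snd.comp_fst.prodMk hc.aemeasurable.comp_snd
  refine (integrable_prod_iff ((hmeas hU.aemeasurable measurable_fst).mul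
    (hmeas hV.aemeasurable measurable_snd)).aestronglyMeasurable).2 ⟨.of_forall fun z => ?_, ?_⟩
  · exact (integrable_signedIoc (U z.1) (U z.2)).mul_prod (integrable_signedIoc (V z.1) (V z.2))
  · refine (integrable_sub_mul_sub_prod_s19 hU hV hUV).norm.congr (.of_forall fun z => ?_)
    simp only [Pi.mul_apply, norm_mul, Measure.volume_eq_prod, Real.norm_eq_abs]
    rw [integral_prod_mul (fun a => |signedIoc _ _ a|) (fun b => |signedIoc _ _ b|)]
    simp only [← Real.norm_eq_abs, integral_norm_signedIoc]

variable [IsProbabilityMeasure μ]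

lemma integral_signedIoc_mul_signedIoc (hU : AEMeasurable U μ) (hV : AEMeasurable V μ) (a b : ℝ) :
    ∫ z : Ω × Ω, signedIoc (U z.1) (U z.2) a * signedIoc (V z.1) (V z.2) b ∂(μ.prod μ)
      = 2 * covar μ ({ω | U ω < a}.indicator 1) ({ω | V ω < b}.indicator 1) := by
  have hUa : NullMeasurableSet {ω | U ω < a} μ := nullMeasurableSet_lt hU aemeasurable_const
  have hVb : NullMeasurableSet {ω | V ω < b} μ := nullMeasurableSet_lt hV aemeasurable_const
  have hone : Integrable (1 : Ω → ℝ) μ := integrable_const 1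
  refine integral_sub_mul_sub_prod_s19 (hone.indicator₀ hUa) (hone.indicator₀ hVb) ?_
  simp_rw [← inter_indicator_mul]
  exact Integrable.indicator₀ (by simp) (hUa.inter hVb)

theorem integral_covar_indicator_lt (hU : Integrable U μ) (hV : Integrable V μ)
    (hUV : Integrable (fun ω => U ω * V ω) μ) :
    ∫ p : ℝ × ℝ, covar μ ({ω | U ω < p.1}.indicator 1) ({ω | V ω < p.2}.indicator 1)
      = covar μ U V := by
  refine mul_left_cancel₀ two_ne_zero ?_
  calc 2 * ∫ p : ℝ × ℝ, covar μ ({ω | U ω < p.1}.indicator 1) ({ω | V ω < p.2}.indicator 1)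
    _ = ∫ p : ℝ × ℝ, ∫ z : Ω × Ω,
          signedIoc (U z.1) (U z.2) p.1 * signedIoc (V z.1) (V z.2) p.2 ∂(μ.prod μ) := by
      simp_rw [integral_signedIoc_mul_signedIoc hU.aemeasurable hV.aemeasurable,
        integral_const_mul]
    _ = ∫ z : Ω × Ω, (∫ p : ℝ × ℝ, signedIoc (U z.1) (U z.2) p.1 * signedIoc (V z.1) (V z.2) p.2)
          ∂(μ.prod μ) :=
      (integral_integral_swap (integrable_signedIoc_mul_signedIoc hU hV hUV)).symm
    _ = ∫ z : Ω × Ω, (U z.1 - U z.2) * (V z.1 - V z.2) ∂(μ.prod μ) := by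
      simp_rw [Measure.volume_eq_prod, integral_prod_mul, integral_signedIoc]
      congr with z
      ring
    _ = 2 * covar μ U V := integral_sub_mul_sub_prod_s19 hU hV hUV

lemma covar_indicator_lt_eq_zero {m M a : ℝ} (hU : ∀ ω, U ω ∈ Icc m M) (ha : a ∉ Ioc m M)
    (g : Ω → ℝ) : covar μ ({ω | U ω < a}.indicator 1) g = 0 := by
  rcases le_or_gt a m with ham | hma
  · have hempty : {ω | U ω < a} = ∅ :=
      eq_empty_of_forall_notMem fun ω hω => (hω.trans_le (ham.trans (hU ω).1)).false
    rw [hempty, indicator_empty]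
    exact covar_const_left 0 g
  · have huniv : {ω | U ω < a} = univ :=
      eq_univ_of_forall fun ω => (hU ω).2.trans_lt (not_le.1 fun haM => ha ⟨hma, haM⟩)
    rw [huniv, indicator_univ]
    exact covar_const_left 1 g

theorem setIntegral_covar_indicator_lt {m M m' M' : ℝ} (hU : AEMeasurable U μ)
    (hV : AEMeasurable V μ) (hUmem : ∀ ω, U ω ∈ Icc m M) (hVmem : ∀ ω, V ω ∈ Icc m' M') :
    ∫ p in Ioo m M ×ˢ Ioo m' M',
        covar μ ({ω | U ω < p.1}.indicator 1) ({ω | V ω < p.2}.indicator 1)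
      = covar μ U V := by
  have hUint : Integrable U μ := .of_mem_Icc m M hU (.of_forall hUmem)
  have hVint : Integrable V μ := .of_mem_Icc m' M' hV (.of_forall hVmem)
  have hUVint : Integrable (fun ω => U ω * V ω) μ :=
    hVint.bdd_mul hU.aestronglyMeasurable
      (.of_forall fun ω => abs_le_max_abs_abs (hUmem ω).1 (hUmem ω).2)
  have hae : Ioo m M ×ˢ Ioo m' M' =ᵐ[volume] Ioc m M ×ˢ Ioc m' M' :=
    Measure.set_prod_ae_eq Ioo_ae_eq_Ioc Ioo_ae_eq_Ioc
  rw [setIntegral_congr_set hae, setIntegral_eq_integral_of_forall_compl_eq_zero,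
    integral_covar_indicator_lt hUint hVint hUVint]
  intro p hp
  rcases not_and_or.1 hp with hp | hp
  · exact covar_indicator_lt_eq_zero hUmem hp _
  · rw [covar_comm]
    exact covar_indicator_lt_eq_zero hVmem hp _

end Hoeffding

section Quantile

variable {Ω : Type*} [MeasurableSpace Ω] {μ : Measure Ω} {X Y : Ω → ℝ} {α β : ℝ}

lemma monotone_cdfF [IsFiniteMeasure μ] (X : Ω → ℝ) : Monotone (cdfF μ X) :=
  fun _ _ hxy => measureReal_mono fun _ hω => hω.trans hxy

lemma aemeasurable_cdfF_comp [IsFiniteMeasure μ] (hX : AEMeasurable X μ) :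
    AEMeasurable (fun ω => cdfF μ X (X ω)) μ :=
  (monotone_cdfF X).measurable.comp_aemeasurable hX

variable [IsProbabilityMeasure μ]

lemma cdfF_eq_cdf_map (hX : AEMeasurable X μ) : cdfF μ X = cdf (μ.map X) := by
  have := Measure.isProbabilityMeasure_map hX
  ext x
  rw [cdf_eq_real, map_measureReal_apply_of_aemeasurable hX measurableSet_Iic]
  rfl

lemma cdfF_mem_Icc (X : Ω → ℝ) (x : ℝ) : cdfF μ X x ∈ Icc (0 : ℝ) 1 :=
  ⟨measureReal_nonneg, measureReal_le_one⟩

lemma continuousWithinAt_cdfF_Ici (hX : AEMeasurable X μ) (x : ℝ) :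
    ContinuousWithinAt (cdfF μ X) (Ici x) x := by
  rw [cdfF_eq_cdf_map hX]
  exact (cdf (μ.map X)).right_continuous x

lemma ae_ne_of_continuousAt_cdfF (hX : AEMeasurable X μ) {x : ℝ}
    (hF : ContinuousAt (cdfF μ X) x) : ∀ᵐ ω ∂μ, X ω ≠ x := by
  have := Measure.isProbabilityMeasure_map hX
  have hatom : μ.map X {x} = 0 := by
    rw [cdfF_eq_cdf_map hX] at hF
    rw [← measure_cdf (μ.map X), StieltjesFunction.measure_singleton,
      hF.continuousWithinAt.leftLim_eq, sub_self, ENNReal.ofReal_zero]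
  rw [Measure.map_apply_of_aemeasurable hX (measurableSet_singleton x)] at hatom
  exact measure_eq_zero_iff_ae_notMem.1 hatom

lemma bddBelow_setOf_le_cdfF (hX : AEMeasurable X μ) (hα : 0 < α) :
    BddBelow {x | α ≤ cdfF μ X x} := by
  have hbot := tendsto_cdf_atBot (μ.map X)
  rw [← cdfF_eq_cdf_map hX] at hbot
  obtain ⟨l, hl⟩ := (hbot.eventually_lt_const hα).exists
  exact ⟨l, fun x hx => ((monotone_cdfF X).reflect_lt (hl.trans_le hx)).le⟩

lemma nonempty_setOf_le_cdfF (hX : AEMeasurable X μ) (hα : α < 1) :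
    {x | α ≤ cdfF μ X x}.Nonempty := by
  have htop := tendsto_cdf_atTop (μ.map X)
  rw [← cdfF_eq_cdf_map hX] at htop
  obtain ⟨x, hx⟩ := (htop.eventually_const_lt hα).exists
  exact ⟨x, hx.le⟩

lemma le_cdfF_lquant (hX : AEMeasurable X μ) (hα : α < 1) : α ≤ cdfF μ X (lquant μ X α) := by
  refine ge_of_tendsto ((continuousWithinAt_cdfF_Ici hX _).mono Ioi_subset_Ici_self) ?_
  filter_upwards [self_mem_nhdsWithin] with y hy
  obtain ⟨x, hx, hxy⟩ := exists_lt_of_csInf_lt (nonempty_setOf_le_cdfF hX hα) hy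
  exact hx.trans (monotone_cdfF X hxy.le)

lemma lquant_le_iff_le_cdfF (hX : AEMeasurable X μ) (hα : α ∈ Ioo (0 : ℝ) 1) {x : ℝ} :
    lquant μ X α ≤ x ↔ α ≤ cdfF μ X x :=
  ⟨fun hx => (le_cdfF_lquant hX hα.2).trans (monotone_cdfF X hx),
    fun hx => csInf_le (bddBelow_setOf_le_cdfF hX hα.1) hx⟩

lemma cdfF_lquant (hX : AEMeasurable X μ) (hF : ContinuousAt (cdfF μ X) (lquant μ X α))
    (hα : α ∈ Ioo (0 : ℝ) 1) : cdfF μ X (lquant μ X α) = α := by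
  refine le_antisymm ?_ (le_cdfF_lquant hX hα.2)
  refine le_of_tendsto (hF.continuousWithinAt (s := Iio (lquant μ X α))) ?_
  filter_upwards [self_mem_nhdsWithin] with x hx
  exact (not_le.1 (mt (lquant_le_iff_le_cdfF hX hα).2 (not_le.2 hx))).le

lemma setOf_le_lquant_ae_eq (hX : AEMeasurable X μ)
    (hF : ContinuousAt (cdfF μ X) (lquant μ X α)) (hα : α ∈ Ioo (0 : ℝ) 1) :
    {ω | X ω ≤ lquant μ X α} =ᵐ[μ] {ω | cdfF μ X (X ω) < α} := by
  filter_upwards [ae_ne_of_continuousAt_cdfF hX hF] with ω hω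
  refine propext ?_
  change X ω ≤ lquant μ X α ↔ cdfF μ X (X ω) < α
  rw [hω.le_iff_lt, ← not_le, lquant_le_iff_le_cdfF hX hα, not_le]

lemma measureReal_cdfF_comp_lt (hX : AEMeasurable X μ)
    (hF : ContinuousAt (cdfF μ X) (lquant μ X α)) (hα : α ∈ Ioo (0 : ℝ) 1) :
    μ.real {ω | cdfF μ X (X ω) < α} = α :=
  (measureReal_congr (setOf_le_lquant_ae_eq hX hF hα)).symm.trans (cdfF_lquant hX hF hα)

theorem quantile_covariance_eq_covar_indicator (hX : AEMeasurable X μ) (hY : AEMeasurable Y μ)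
    (hFX : ContinuousAt (cdfF μ X) (lquant μ X α)) (hFY : ContinuousAt (cdfF μ Y) (lquant μ Y β))
    (hα : α ∈ Ioo (0 : ℝ) 1) (hβ : β ∈ Ioo (0 : ℝ) 1) :
    (μ {ω | X ω ≤ lquant μ X α ∧ Y ω ≤ lquant μ Y β}).toReal - α * β
      = covar μ ({ω | cdfF μ X (X ω) < α}.indicator 1) ({ω | cdfF μ Y (Y ω) < β}.indicator 1) := by
  rw [covar_indicator_one_s19 (nullMeasurableSet_lt (aemeasurable_cdfF_comp hX) aemeasurable_const)
      (nullMeasurableSet_lt (aemeasurable_cdfF_comp hY) aemeasurable_const),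
    measureReal_cdfF_comp_lt hX hFX hα, measureReal_cdfF_comp_lt hY hFY hβ]
  exact congrArg (· - α * β) (measureReal_congr
    ((setOf_le_lquant_ae_eq hX hFX hα).inter (setOf_le_lquant_ae_eq hY hFY hβ)))

end Quantile

theorem summary_QF_covariance_wrt_lebesgue_is_spearman_covariance_general
    {Ω : Type*} [MeasurableSpace Ω] (μ : Measure Ω) [IsProbabilityMeasure μ]
    (X Y : Ω → ℝ) (hX : AEMeasurable X μ) (hY : AEMeasurable Y μ)
    (hFX : Continuous (cdfF μ X)) (hFY : Continuous (cdfF μ Y)) :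
    ∫ p in Set.Ioo (0 : ℝ) 1 ×ˢ Set.Ioo (0 : ℝ) 1,
        ((μ {ω | X ω ≤ lquant μ X p.1 ∧ Y ω ≤ lquant μ Y p.2}).toReal - p.1 * p.2)
      = covar μ (fun ω => cdfF μ X (X ω)) (fun ω => cdfF μ Y (Y ω)) := by
  rw [← setIntegral_covar_indicator_lt (aemeasurable_cdfF_comp hX) (aemeasurable_cdfF_comp hY)
    (fun ω => cdfF_mem_Icc X (X ω)) (fun ω => cdfF_mem_Icc Y (Y ω))]
  exact setIntegral_congr_fun (measurableSet_Ioo.prod measurableSet_Ioo) fun p hp =>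
    quantile_covariance_eq_covar_indicator hX hY hFX.continuousAt hFY.continuousAt hp.1 hp.2

theorem summary_QF_covariance_wrt_lebesgue_is_spearman_covariance
    {Ω : Type*} [MeasurableSpace Ω] (μ : Measure Ω) [IsProbabilityMeasure μ]
    (X Y : Ω → ℝ) (hX : Measurable X) (hY : Measurable Y)
    (hFX : Continuous (cdfF μ X)) (hFY : Continuous (cdfF μ Y)) :
    ∫ p in Set.Ioo (0 : ℝ) 1 ×ˢ Set.Ioo (0 : ℝ) 1,
        ((μ {ω | X ω ≤ lquant μ X p.1 ∧ Y ω ≤ lquant μ Y p.2}).toReal - p.1 * p.2)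
      = covar μ (fun ω => cdfF μ X (X ω)) (fun ω => cdfF μ Y (Y ω)) :=
  summary_QF_covariance_wrt_lebesgue_is_spearman_covariance_general μ X Y hX.aemeasurable
    hY.aemeasurable hFX hFY
end
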